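/- There is a universal constant C such that for every q ≥ 2 the following holds. Let a = k_0 < k_1 < ... < k_L = b be integers and let g be a complex-valued function on the integer interval [a, b). Then ‖g‖_{Ṽ^q_{k ∈ [a,b)}} ≤ C (∑_{l=0}^{L−1} ‖g‖²_{V^q_{k ∈ [k_l, k_{l+1})}})^{1/2}. -/

import Mathlib

/-!
Fix an increasing sequence `u` in `[a, b)`, write `c j` for the block of the partition containing
`u j`, and `N l` for the `q`-variation norm of `g` on block `l`. The jumps of `u` are of two kinds.

* Jumps inside a block. Clamping `u` to block `l` gives a weakly increasing sequence in that block
  which keeps every jump of `u` inside it; repeated points contribute nothing to a variation sum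
  (`sum_rpow_le_vSemi_of_monotone`), so these jumps contribute at most `∑ l, N l ^ q`.
* Jumps from one block to a later one. Such a jump has size at most `N (c j) + N (c (j + 1))`, and
  each block is left, and entered, by at most one such jump (`sum_filter_lt_comp_le`). Hence these
  contribute at most `2 ^ q * (∑ l, N l ^ q + ∑ l, N l ^ q)`.

Since `∑ l, N l ^ q ≤ (∑ l, N l ^ 2) ^ (q / 2)` for `q ≥ 2` (`sum_rpow_le_sq_rpow`) and
`1 + 2 ^ q + 2 ^ q ≤ 5 ^ q`, the constant `C = 5` works.
-/

open scoped ENNReal NNReal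

/-- The `r`-variation seminorm of `g` over index set `K`. -/
noncomputable def vSemi {ι E : Type*} [LinearOrder ι] [NormedAddCommGroup E]
    (r : ℝ) (K : Set ι) (g : ι → E) : ℝ≥0∞ :=
  ⨆ (M : ℕ) (u : Fin (M + 1) → ι) (_ : StrictMono u) (_ : ∀ i, u i ∈ K),
    (∑ j : Fin M, (‖g (u j.succ) - g (u j.castSucc)‖₊ : ℝ≥0∞) ^ r) ^ (1 / r)

/-- The `r`-variation norm: `sup_{k ∈ K} ‖g k‖ + ‖g‖_{Ṽ^r}`. -/
noncomputable def vNorm {ι E : Type*} [LinearOrder ι] [NormedAddCommGroup E]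
    (r : ℝ) (K : Set ι) (g : ι → E) : ℝ≥0∞ :=
  (⨆ k ∈ K, (‖g k‖₊ : ℝ≥0∞)) + vSemi r K g

/-- A weakly increasing sequence can be thinned to a strictly increasing one with the same endpoint
and the same variation sum. Fixing the endpoint is what makes the induction on the length work. -/
lemma exists_strictMono_sum_eq {ι E : Type*} [LinearOrder ι] [NormedAddCommGroup E]
    {r : ℝ} (hr : 0 < r) (K : Set ι) (g : ι → E) (n : ℕ) :
    ∀ v : Fin (n + 1) → ι, Monotone v → (∀ i, v i ∈ K) →
    ∃ (m : ℕ) (u : Fin (m + 1) → ι), StrictMono u ∧ (∀ i, u i ∈ K) ∧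
      u (Fin.last m) = v (Fin.last n) ∧
      ∑ j : Fin n, (‖g (v j.succ) - g (v j.castSucc)‖₊ : ℝ≥0∞) ^ r
        = ∑ j : Fin m, (‖g (u j.succ) - g (u j.castSucc)‖₊ : ℝ≥0∞) ^ r := by
  induction n with
  | zero =>
    intro v _ hK
    exact ⟨0, v, Subsingleton.strictMono (α := Fin 1) v, hK, rfl, rfl⟩
  | succ n ih =>
    intro v hv hK
    obtain ⟨m, u, hu, huK, hlast, hsum⟩ := ih (fun i => v i.castSucc)
      (fun i j h => hv (Fin.castSucc_le_castSucc_iff.2 h)) (fun i => hK _)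
    have hsum' : ∑ j : Fin n, (‖g (v j.castSucc.succ) - g (v j.castSucc.castSucc)‖₊ : ℝ≥0∞) ^ r
        = ∑ j : Fin m, (‖g (u j.succ) - g (u j.castSucc)‖₊ : ℝ≥0∞) ^ r := by
      simpa using hsum
    have hle : v (Fin.last n).castSucc ≤ v (Fin.last (n + 1)) := hv (Fin.le_last _)
    rcases hle.eq_or_lt with heq | hlt
    · refine ⟨m, u, hu, huK, hlast.trans heq, ?_⟩
      rw [Fin.sum_univ_castSucc, hsum', Fin.succ_last, ← heq]
      simp [hr]
    · refine ⟨m + 1, Fin.snoc (α := fun _ => ι) u (v (Fin.last (n + 1))), ?_, ?_, by simp, ?_⟩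
      · rw [Fin.strictMono_iff_lt_succ]
        intro i
        induction i using Fin.lastCases with
        | last => rw [Fin.succ_last, Fin.snoc_last, Fin.snoc_castSucc, hlast]; exact hlt
        | cast i =>
          rw [Fin.succ_castSucc, Fin.snoc_castSucc, Fin.snoc_castSucc]
          exact hu Fin.castSucc_lt_succ
      · intro i
        induction i using Fin.lastCases with
        | last => simpa using hK _
        | cast i => simpa using huK i
      · rw [Fin.sum_univ_castSucc, hsum', Fin.sum_univ_castSucc, Fin.succ_last, Fin.succ_last,
          Fin.snoc_last, Fin.snoc_castSucc, hlast]
        simp only [Fin.succ_castSucc, Fin.snoc_castSucc]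

/-- The variation seminorm also controls weakly increasing sequences. -/
lemma sum_rpow_le_vSemi_of_monotone {ι E : Type*} [LinearOrder ι] [NormedAddCommGroup E]
    {r : ℝ} (hr : 0 < r) (K : Set ι) (g : ι → E) (n : ℕ)
    (v : Fin (n + 1) → ι) (hv : Monotone v) (hK : ∀ i, v i ∈ K) :
    ∑ j : Fin n, (‖g (v j.succ) - g (v j.castSucc)‖₊ : ℝ≥0∞) ^ r ≤ vSemi r K g ^ r := by
  obtain ⟨m, u, hu, huK, -, hsum⟩ := exists_strictMono_sum_eq hr K g n v hv hK
  rw [hsum, ← ENNReal.rpow_inv_le_iff hr, ← one_div]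
  exact le_iSup₂_of_le m u (le_iSup₂_of_le hu huK le_rfl)

/-- The inclusion `ℓ² ⊆ ℓ^q` for `q ≥ 2`, with constant one. -/
lemma sum_rpow_le_sq_rpow {ι : Type*} (s : Finset ι) (N : ι → ℝ≥0∞) {q : ℝ} (hq : 2 ≤ q) :
    ∑ l ∈ s, N l ^ q ≤ ((∑ l ∈ s, N l ^ (2:ℝ)) ^ (1/2 : ℝ)) ^ q := by
  set S := (∑ l ∈ s, N l ^ (2:ℝ)) ^ (1/2 : ℝ) with hS
  have hS2 : S ^ (2:ℝ) = ∑ l ∈ s, N l ^ (2:ℝ) := by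
    rw [hS, ← ENNReal.rpow_mul]; norm_num
  have hN : ∀ l ∈ s, N l ≤ S := by
    intro l hl
    rw [← ENNReal.rpow_le_rpow_iff (z := 2) (by norm_num), hS2]
    exact Finset.single_le_sum (f := fun l => N l ^ (2:ℝ)) (fun _ _ => zero_le) hl
  have hsplit : ∀ x : ℝ≥0∞, x ^ q = x ^ (2:ℝ) * x ^ (q - 2) := by
    intro x
    rw [← ENNReal.rpow_add_of_nonneg _ _ (by norm_num) (by linarith)]
    congr 1; ring
  calc ∑ l ∈ s, N l ^ q = ∑ l ∈ s, N l ^ (2:ℝ) * N l ^ (q - 2) :=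
        Finset.sum_congr rfl fun l _ => hsplit _
    _ ≤ ∑ l ∈ s, N l ^ (2:ℝ) * S ^ (q - 2) :=
        Finset.sum_le_sum fun l hl =>
          mul_le_mul_right (ENNReal.rpow_le_rpow (hN l hl) (by linarith)) _
    _ = S ^ q := by rw [← Finset.sum_mul, ← hS2, ← hsplit]

/-- A monotone block label `c` leaves, and enters, each block at most once, so sums over the
label-changing steps are bounded by sums over all blocks. -/
lemma sum_filter_lt_comp_le {M L : ℕ} (c : Fin (M + 1) → Fin L) (hc : Monotone c)
    (F : Fin L → ℝ≥0∞) :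
    ∑ j : Fin M with c j.castSucc < c j.succ, F (c j.castSucc) ≤ ∑ l, F l ∧
    ∑ j : Fin M with c j.castSucc < c j.succ, F (c j.succ) ≤ ∑ l, F l := by
  have key : ∀ d : Fin M → Fin L,
      StrictMonoOn d (Finset.univ.filter fun j : Fin M => c j.castSucc < c j.succ) →
      ∑ j : Fin M with c j.castSucc < c j.succ, F (d j) ≤ ∑ l, F l := by
    intro d hd
    rw [← Finset.sum_image (f := F) hd.injOn]
    exact Finset.sum_le_sum_of_subset (Finset.subset_univ _)
  constructor
  · refine key (fun j => c j.castSucc) fun i hi j _ hij => ?_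
    have hi : c i.castSucc < c i.succ := by simpa using hi
    exact hi.trans_le (hc (Fin.succ_le_castSucc_iff.2 hij))
  · refine key (fun j => c j.succ) fun i _ j hj hij => ?_
    have hj : c j.castSucc < c j.succ := by simpa using hj
    exact (hc (Fin.succ_le_castSucc_iff.2 hij)).trans_lt hj

lemma exists_mem_block {L : ℕ} (k : Fin (L + 1) → ℤ) (x : ℤ) (h0 : k 0 ≤ x)
    (h1 : x < k (Fin.last L)) : ∃ l : Fin L, x ∈ Set.Ico (k l.castSucc) (k l.succ) := by
  have : ∀ i : Fin (L + 1), x < k i → ∃ l : Fin L, x ∈ Set.Ico (k l.castSucc) (k l.succ) := by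
    intro i
    induction i using Fin.induction with
    | zero => intro h; omega
    | succ i ih =>
      intro h
      rcases lt_or_ge x (k i.castSucc) with h' | h'
      · exact ih h'
      · exact ⟨i, h', h⟩
  exact this _ h1

/-- Square-function bound for the `q`-variation seminorm over a partition
`a = k_0 < k_1 < ... < k_L = b` of the integer interval `[a, b)`:
`‖g‖_{Ṽ^q_{[a,b)}} ≤ C (∑_l ‖g‖²_{V^q_{[k_l, k_{l+1})}})^{1/2}`. -/
theorem vSemi_partition_bound :
    ∃ C : ℝ≥0, ∀ q : ℝ, 2 ≤ q → ∀ (a b : ℤ) (g : ℤ → ℂ) (L : ℕ) (k : Fin (L + 1) → ℤ),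
      StrictMono k → k 0 = a → k (Fin.last L) = b →
      vSemi q (Set.Ico a b) g
        ≤ C * (∑ l : Fin L,
            (vNorm q (Set.Ico (k l.castSucc) (k l.succ)) g) ^ (2:ℝ)) ^ (1/2 : ℝ) := by
  refine ⟨5, fun q hq a b g L k hk ha hb => ?_⟩
  have hq0 : 0 < q := by linarith
  set N : Fin L → ℝ≥0∞ := fun l => vNorm q (Set.Ico (k l.castSucc) (k l.succ)) g with hN
  set S : ℝ≥0∞ := (∑ l : Fin L, N l ^ (2:ℝ)) ^ (1/2 : ℝ) with hS
  have hNS : ∑ l, N l ^ q ≤ S ^ q := sum_rpow_le_sq_rpow _ N hq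
  refine iSup₂_le fun M u => iSup₂_le fun hu huK => ?_
  rw [one_div, ENNReal.rpow_inv_le_iff hq0]
  choose c hcm using fun i => exists_mem_block k (u i) (ha ▸ (huK i).1) (hb ▸ (huK i).2)
  have hc : Monotone c := by
    intro i j hij
    by_contra! h
    have h1 : k (c j).succ ≤ k (c i).castSucc := hk.monotone (Fin.succ_le_castSucc_iff.2 h)
    have h2 := (hcm i).1
    have h3 := (hcm j).2
    have h4 := hu.monotone hij
    omega
  have hval : ∀ i, (‖g (u i)‖₊ : ℝ≥0∞) ≤ N (c i) := fun i =>
    (le_iSup₂_of_le (f := fun x (_ : x ∈ Set.Ico (k (c i).castSucc) (k (c i).succ)) =>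
      (‖g x‖₊ : ℝ≥0∞)) (u i) (hcm i) le_rfl).trans le_self_add
  set D : Fin M → ℝ≥0∞ := fun j => (‖g (u j.succ) - g (u j.castSucc)‖₊ : ℝ≥0∞) ^ q with hD
  have hin : ∑ j : Fin M with ¬ c j.castSucc < c j.succ, D j ≤ ∑ l, N l ^ q := by
    rw [← Finset.sum_fiberwise _ (fun j : Fin M => c j.castSucc)]
    refine Finset.sum_le_sum fun l _ => ?_
    -- `v` is `u` clamped to block `l`; the largest integer of the block is `k l.succ - 1`.
    let v : Fin (M + 1) → ℤ := fun i => max (k l.castSucc) (min (u i) (k l.succ - 1))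
    have hlt : k l.castSucc < k l.succ := hk Fin.castSucc_lt_succ
    have hv : Monotone v := fun i j hij =>
      max_le_max le_rfl (min_le_min (hu.monotone hij) le_rfl)
    have hvK : ∀ i, v i ∈ Set.Ico (k l.castSucc) (k l.succ) := fun i => by
      simp only [v, Set.mem_Ico]; omega
    have hvu : ∀ i, c i = l → v i = u i := by
      rintro i rfl
      have := hcm i
      simp only [v, Set.mem_Ico] at this ⊢; omega
    calc _ ≤ ∑ j : Fin M, (‖g (v j.succ) - g (v j.castSucc)‖₊ : ℝ≥0∞) ^ q := by
          refine (Finset.sum_le_sum fun j hj => ?_).trans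
            (Finset.sum_le_sum_of_subset (Finset.subset_univ _))
          simp only [Finset.mem_filter, Finset.mem_univ, true_and] at hj
          have h2 : c j.succ = l :=
            (le_antisymm (not_lt.1 hj.1) (hc Fin.castSucc_lt_succ.le)).trans hj.2
          rw [hvu _ hj.2, hvu _ h2]
      _ ≤ vSemi q (Set.Ico (k l.castSucc) (k l.succ)) g ^ q :=
          sum_rpow_le_vSemi_of_monotone hq0 _ g M v hv hvK
      _ ≤ N l ^ q := ENNReal.rpow_le_rpow le_add_self hq0.le
  have hout : ∑ j : Fin M with c j.castSucc < c j.succ, D j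
      ≤ 2 ^ q * (∑ l, N l ^ q + ∑ l, N l ^ q) := by
    obtain ⟨h1, h2⟩ := sum_filter_lt_comp_le c hc (fun l => N l ^ q)
    calc _ ≤ ∑ j : Fin M with c j.castSucc < c j.succ,
            2 ^ q * (N (c j.succ) ^ q + N (c j.castSucc) ^ q) := by
          refine Finset.sum_le_sum fun j _ => ?_
          have hj : (‖g (u j.succ) - g (u j.castSucc)‖₊ : ℝ≥0∞)
              ≤ N (c j.succ) + N (c j.castSucc) :=
            (by exact_mod_cast nnnorm_sub_le (g (u j.succ)) (g (u j.castSucc)) :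
              (‖g (u j.succ) - g (u j.castSucc)‖₊ : ℝ≥0∞)
                ≤ ‖g (u j.succ)‖₊ + ‖g (u j.castSucc)‖₊).trans
            (add_le_add (hval _) (hval _))
          refine (ENNReal.rpow_le_rpow hj hq0.le).trans
            ((ENNReal.rpow_add_le_mul_rpow_add_rpow _ _ (by linarith)).trans ?_)
          gcongr
          · norm_num
          · linarith
      _ ≤ _ := by
          rw [← Finset.mul_sum, Finset.sum_add_distrib]
          gcongr
  have h5 : (1 : ℝ≥0∞) + 2 ^ q + 2 ^ q ≤ 5 ^ q := by
    have h1 := ENNReal.add_rpow_le_rpow_add (1 : ℝ≥0∞) 2 (by linarith : 1 ≤ q)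
    have h2 := ENNReal.add_rpow_le_rpow_add (1 + 2 : ℝ≥0∞) 2 (by linarith : 1 ≤ q)
    rw [ENNReal.one_rpow] at h1
    calc (1 : ℝ≥0∞) + 2 ^ q + 2 ^ q ≤ (1 + 2) ^ q + 2 ^ q := by gcongr
      _ ≤ (1 + 2 + 2) ^ q := h2
      _ = 5 ^ q := by norm_num
  calc ∑ j, D j
      = ∑ j : Fin M with c j.castSucc < c j.succ, D j
        + ∑ j : Fin M with ¬ c j.castSucc < c j.succ, D j :=
        (Finset.sum_filter_add_sum_filter_not _ _ _).symm
    _ ≤ 2 ^ q * (S ^ q + S ^ q) + S ^ q :=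
        add_le_add (hout.trans (by gcongr)) (hin.trans hNS)
    _ = (1 + 2 ^ q + 2 ^ q) * S ^ q := by ring
    _ ≤ 5 ^ q * S ^ q := by gcongr
    _ = _ := by rw [ENNReal.mul_rpow_of_nonneg _ _ hq0.le]; norm_num
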